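/- The two-variable quaternionic Mahler measure of 1 + x + y satisfies m_ℍ(1 + x + y) = 1/2 − 11√3/(16π) + (3√3/(4π))·L(χ₋₃, 2), where χ₋₃ is the nontrivial Dirichlet character modulo 3 (χ₋₃(n) = 1 if n ≡ 1 mod 3, −1 if n ≡ 2 mod 3, 0 if 3 | n) and L(χ₋₃, 2) = Σ_{n≥1} χ₋₃(n)/n². -/

import Mathlib

open MeasureTheory Quaternion

noncomputable instance : MeasurableSpace (Quaternion ℝ) := borel _
instance : BorelSpace (Quaternion ℝ) := ⟨rfl⟩
instance : Nonempty (Metric.sphere (0 : Quaternion ℝ) 1) := ⟨⟨1, by simp⟩⟩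

/-- The probability Haar measure `μ` on the group `T¹(ℍ)` of unit quaternions
(the Haar measure normalized so that the whole group has measure `1`). -/
noncomputable def muH : Measure (Metric.sphere (0 : Quaternion ℝ) 1) :=
  Measure.haarMeasure ⊤

/-- The quaternionic Mahler measure `m_ℍ(f) = ∫_{T¹(ℍ)} log |f(q)| dμ(q)`. -/
noncomputable def mahlerH (f : Quaternion ℝ → Quaternion ℝ) : ℝ :=
  ∫ q : Metric.sphere (0 : Quaternion ℝ) 1, Real.log ‖f q‖ ∂muH
/-- The two-variable quaternionic Mahler measure
`m_ℍ(f) = ∫_{T¹(ℍ)×T¹(ℍ)} log |f(x,y)| d(μ⊗μ)(x,y)`. -/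
noncomputable def mahlerH2 (f : Quaternion ℝ → Quaternion ℝ → Quaternion ℝ) : ℝ :=
  ∫ p : (Metric.sphere (0 : Quaternion ℝ) 1) × (Metric.sphere (0 : Quaternion ℝ) 1),
    Real.log ‖f p.1 p.2‖ ∂(muH.prod muH)

/-!
For a unit quaternion `u`, the angle between `u` and a Haar-random unit quaternion has density
`(2 / π) sin² θ` on `[0, π]`. Expanding `log (1 + 2 r cos θ + r²)` in cosines, only the terms of
order `0` and `2` survive integration against `sin² θ`, so the mean of `log ‖a + y‖` over unit `y`
is elementary in `‖a‖`, with a change of regime at `‖a‖ = 1`. With `a = 1 + x` and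
`‖1 + x‖² = 2 + 2 cos θ` the regimes meet at `θ = 2π/3`, and the only non-elementary contribution
to the outer integral is `∫ log (2 + 2 cos θ)` over `[0, 2π/3]`. This is twice the Clausen value
`Cl₂(π/3)`, which the duplication formula reduces to `Cl₂(2π/3) = (√3 / 2) L(χ₋₃, 2)`.
-/

open Metric Module Real Set
open scoped ENNReal InnerProductSpace Pointwise

lemma integrable_prod_of_le_of_le_integral {α β : Type*} [MeasurableSpace α] [MeasurableSpace β]
    {μ : Measure α} {ν : Measure β} [IsFiniteMeasure μ] [IsFiniteMeasure ν] {f : α × β → ℝ}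
    (hf : AEStronglyMeasurable f (μ.prod ν))
    (hslice : ∀ᵐ x ∂μ, Integrable (fun y => f (x, y)) ν) {m M : ℝ}
    (hM : ∀ᵐ p ∂μ.prod ν, f p ≤ M) (hm : ∀ᵐ x ∂μ, m ≤ ∫ y, f (x, y) ∂ν) :
    Integrable f (μ.prod ν) := by
  refine (integrable_prod_iff hf).2 ⟨hslice, Integrable.of_bound (C := ∫ _, |M| + M ∂ν - m)
    hf.norm.integral_prod_right' ?_⟩
  filter_upwards [hslice, hm, Measure.ae_ae_of_ae_prod hM] with x hint hmx hMx
  have hnorm : ∀ᵐ y ∂ν, ‖f (x, y)‖ ≤ |M| + M - f (x, y) := by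
    filter_upwards [hMx] with y hy
    rw [norm_eq_abs, abs_le]
    constructor <;> linarith [le_abs_self M, neg_abs_le M, abs_nonneg M]
  calc ‖∫ y, ‖f (x, y)‖ ∂ν‖ = ∫ y, ‖f (x, y)‖ ∂ν :=
        norm_of_nonneg (integral_nonneg fun _ => norm_nonneg _)
    _ ≤ ∫ y, |M| + M - f (x, y) ∂ν :=
        integral_mono_ae hint.norm ((integrable_const _).sub hint) hnorm
    _ = ∫ _, |M| + M ∂ν - ∫ y, f (x, y) ∂ν := integral_sub (integrable_const _) hint
    _ ≤ ∫ _, |M| + M ∂ν - m := by linarith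

section SphereMeasure

section Polar

variable {E : Type*} [NormedAddCommGroup E] [NormedSpace ℝ E] [FiniteDimensional ℝ E]
  [Nontrivial E] [MeasurableSpace E] [BorelSpace E] (μ : Measure E) [μ.IsAddHaarMeasure]

lemma lintegral_eq_lintegral_toSphere {f : E → ℝ≥0∞} (hf : Measurable f) :
    ∫⁻ x, f x ∂μ = ∫⁻ r in Ioi (0 : ℝ), ENNReal.ofReal (r ^ (finrank ℝ E - 1)) *
      ∫⁻ y : sphere (0 : E) 1, f (r • y) ∂μ.toSphere := by
  have hmeas : Measurable fun p : sphere (0 : E) 1 × ℝ => f (p.2 • p.1) := by fun_prop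
  calc
    ∫⁻ x, f x ∂μ = ∫⁻ x : ({0}ᶜ : Set E), f x ∂(μ.comap (↑)) := by
      rw [lintegral_subtype_comap (measurableSet_singleton _).compl f, restrict_compl_singleton]
    _ = ∫⁻ p : sphere (0 : E) 1 × Ioi (0 : ℝ), f (p.2.1 • p.1)
          ∂μ.toSphere.prod (.volumeIoiPow (finrank ℝ E - 1)) := by
      rw [← μ.measurePreserving_homeomorphUnitSphereProd.lintegral_comp_emb
        (Homeomorph.measurableEmbedding _)]
      refine lintegral_congr fun x => ?_
      simp only [homeomorphUnitSphereProd_apply_snd_coe, homeomorphUnitSphereProd_apply_fst_coe]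
      rw [smul_inv_smul₀ (norm_ne_zero_iff.2 x.2)]
    _ = ∫⁻ r : Ioi (0 : ℝ), ∫⁻ y : sphere (0 : E) 1, f (r.1 • y) ∂μ.toSphere
          ∂.volumeIoiPow (finrank ℝ E - 1) :=
      lintegral_prod_symm' _ (hmeas.comp
        (measurable_fst.prodMk (measurable_subtype_coe.comp measurable_snd)))
    _ = ∫⁻ r in Ioi (0 : ℝ), ENNReal.ofReal (r ^ (finrank ℝ E - 1)) *
          ∫⁻ y : sphere (0 : E) 1, f (r • y) ∂μ.toSphere := by
      have hslice : Measurable fun r : Ioi (0 : ℝ) => ∫⁻ y, f (r.1 • y.1) ∂μ.toSphere :=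
        hmeas.lintegral_prod_left'.comp measurable_subtype_coe
      rw [Measure.volumeIoiPow, lintegral_withDensity_eq_lintegral_mul _ (by fun_prop) hslice]
      exact lintegral_subtype_comap measurableSet_Ioi fun r : ℝ =>
        ENNReal.ofReal (r ^ (finrank ℝ E - 1)) * ∫⁻ y : sphere (0 : E) 1, f (r • y) ∂μ.toSphere

lemma lintegral_comp_norm_eq_toSphere {f : ℝ → ℝ≥0∞} (hf : Measurable f) :
    ∫⁻ x, f ‖x‖ ∂μ = μ.toSphere univ *
      ∫⁻ r in Ioi (0 : ℝ), ENNReal.ofReal (r ^ (finrank ℝ E - 1)) * f r := by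
  rw [lintegral_eq_lintegral_toSphere μ (f := fun x => f ‖x‖) (by fun_prop),
    ← lintegral_const_mul _ (by fun_prop)]
  refine setLIntegral_congr_fun measurableSet_Ioi fun r (hr : 0 < r) => ?_
  simp only [norm_smul, norm_eq_of_mem_sphere, norm_of_nonneg hr.le, mul_one, lintegral_const]
  ring

end Polar

lemma lintegral_upperHalfPlane_eq_polar {f : ℝ × ℝ → ℝ≥0∞} (hf : Measurable f) :
    ∫⁻ t, ∫⁻ s in Ioi (0 : ℝ), f (t, s) =
      ∫⁻ r in Ioi (0 : ℝ), ∫⁻ θ in Ioo 0 π, ENNReal.ofReal r * f (r * cos θ, r * sin θ) := by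
  have hU : MeasurableSet (univ ×ˢ Ioi 0 : Set (ℝ × ℝ)) := MeasurableSet.univ.prod measurableSet_Ioi
  have hangle (r : ℝ) (hr : 0 < r) (θ : ℝ) (hθ : θ ∈ Ioo (-π) π) :
      r * sin θ ∈ Ioi 0 ↔ θ ∈ Ioo 0 π := by
    rw [mem_Ioi, mul_pos_iff_of_pos_left hr]
    refine ⟨fun h => ⟨?_, hθ.2⟩, sin_pos_of_mem_Ioo⟩
    by_contra! h0
    exact h.not_ge (sin_nonpos_of_nonpos_of_neg_pi_le h0 hθ.1.le)
  calc
    ∫⁻ t, ∫⁻ s in Ioi (0 : ℝ), f (t, s) = ∫⁻ p in univ ×ˢ Ioi (0 : ℝ), f p := by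
      rw [Measure.volume_eq_prod, ← Measure.prod_restrict, lintegral_prod _ hf.aemeasurable,
        Measure.restrict_univ]
    _ = ∫⁻ p in Ioi (0 : ℝ) ×ˢ Ioo (-π) π, ENNReal.ofReal p.1 •
          (univ ×ˢ Ioi (0 : ℝ)).indicator f (polarCoord.symm p) := by
      rw [← lintegral_indicator hU, ← lintegral_comp_polarCoord_symm, polarCoord_target]
    _ = ∫⁻ r in Ioi (0 : ℝ), ∫⁻ θ in Ioo (-π) π, ENNReal.ofReal r *
          (univ ×ˢ Ioi (0 : ℝ)).indicator f (r * cos θ, r * sin θ) := by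
      rw [Measure.volume_eq_prod, ← Measure.prod_restrict, lintegral_prod]
      · rfl
      · have := (hf.indicator hU).comp continuous_polarCoord_symm.measurable
        exact (measurable_fst.ennreal_ofReal.smul this).aemeasurable
    _ = _ := by
      refine setLIntegral_congr_fun measurableSet_Ioi fun r (hr : 0 < r) => ?_
      rw [← lintegral_indicator measurableSet_Ioo, ← lintegral_indicator measurableSet_Ioo]
      refine lintegral_congr fun θ => ?_
      by_cases hθ : θ ∈ Ioo (-π) π
      · simp only [indicator, hθ, if_true, mem_prod, mem_univ, true_and, hangle r hr θ hθ,
          mul_ite, mul_zero]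
      · rw [indicator_of_notMem hθ, indicator_of_notMem]
        exact fun h => hθ ⟨by linarith [h.1, pi_pos], h.2⟩

section Inner

variable {E : Type*} [NormedAddCommGroup E] [InnerProductSpace ℝ E] [FiniteDimensional ℝ E]
  [MeasurableSpace E] [BorelSpace E] {u : E}

lemma measurePreserving_inner_orthogonalProjectionOnto (hu : ‖u‖ = 1) :
    MeasurePreserving fun x : E => (⟪u, x⟫_ℝ, (ℝ ∙ u)ᗮ.orthogonalProjectionOnto x) := by
  have hsplit := (WithLp.volume_preserving_ofLp (ℝ ∙ u) (ℝ ∙ u)ᗮ).comp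
    (ℝ ∙ u).orthogonalDecomposition.measurePreserving
  have hline := (LinearIsometryEquiv.toSpanUnitSingleton u hu).symm.measurePreserving
  have hinner (x : E) : (LinearIsometryEquiv.toSpanUnitSingleton u hu).symm
      ((ℝ ∙ u).orthogonalProjectionOnto x) = ⟪u, x⟫_ℝ := by
    rw [LinearIsometryEquiv.symm_apply_eq]
    ext
    rw [Submodule.coe_orthogonalProjectionOnto_apply,
      Submodule.starProjection_unit_singleton ℝ hu, LinearIsometryEquiv.toSpanUnitSingleton_apply]
  simpa only [Function.comp_def, Submodule.orthogonalDecomposition_apply, Prod.map, hinner, id,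
    ← Measure.volume_eq_prod]
    using (hline.prod (MeasurePreserving.id (volume : Measure (ℝ ∙ u)ᗮ))).comp hsplit

lemma lintegral_inner_norm_eq_prod (hu : ‖u‖ = 1) {H : ℝ × ℝ → ℝ≥0∞} (hH : Measurable H) :
    ∫⁻ x : E, H (⟪u, x⟫_ℝ, ‖x‖) =
      ∫⁻ t : ℝ, ∫⁻ v : (ℝ ∙ u)ᗮ, H (t, √(t ^ 2 + ‖v‖ ^ 2)) := by
  have hnorm (x : E) : √(⟪u, x⟫_ℝ ^ 2 + ‖(ℝ ∙ u)ᗮ.orthogonalProjectionOnto x‖ ^ 2) = ‖x‖ := by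
    have hu' : ‖(ℝ ∙ u).orthogonalProjectionOnto x‖ = |⟪u, x⟫_ℝ| := by
      rw [Submodule.coe_norm, Submodule.coe_orthogonalProjectionOnto_apply,
        Submodule.starProjection_unit_singleton ℝ hu, norm_smul, hu, mul_one, norm_eq_abs]
    rw [← sq_abs, ← hu', ← Submodule.norm_sq_eq_add_norm_sq_projection, sqrt_sq (norm_nonneg x)]
  have hmeas : Measurable fun p : ℝ × (ℝ ∙ u)ᗮ => H (p.1, √(p.1 ^ 2 + ‖p.2‖ ^ 2)) := by fun_prop
  rw [← lintegral_prod _ hmeas.aemeasurable, ← Measure.volume_eq_prod,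
    ← (measurePreserving_inner_orthogonalProjectionOnto hu).lintegral_comp hmeas]
  simp only [hnorm]

lemma lintegral_inner_norm_eq_polar (hu : ‖u‖ = 1) (hE : 2 ≤ finrank ℝ E)
    {H : ℝ × ℝ → ℝ≥0∞} (hH : Measurable H) :
    ∫⁻ x : E, H (⟪u, x⟫_ℝ, ‖x‖) =
      (volume : Measure (ℝ ∙ u)ᗮ).toSphere univ * ∫⁻ r in Ioi (0 : ℝ), ∫⁻ θ in Ioo 0 π,
        ENNReal.ofReal (r ^ (finrank ℝ E - 1)) * ENNReal.ofReal (sin θ ^ (finrank ℝ E - 2)) *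
          H (r * cos θ, r) := by
  have hu0 : u ≠ 0 := norm_ne_zero_iff.1 (hu ▸ one_ne_zero)
  obtain ⟨n, hn⟩ : ∃ n, finrank ℝ E = n + 2 := Nat.exists_eq_add_of_le' hE
  have hn' : finrank ℝ (ℝ ∙ u)ᗮ = n + 1 := by
    have := Fact.mk hn
    exact Submodule.finrank_orthogonal_span_singleton hu0
  have : Nontrivial (ℝ ∙ u)ᗮ := nontrivial_of_finrank_pos (R := ℝ) (by omega)
  have hmeas : Measurable fun p : ℝ × ℝ =>
      ENNReal.ofReal (p.2 ^ n) * H (p.1, √(p.1 ^ 2 + p.2 ^ 2)) := by fun_prop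
  calc
    ∫⁻ x : E, H (⟪u, x⟫_ℝ, ‖x‖) = ∫⁻ t, (volume : Measure (ℝ ∙ u)ᗮ).toSphere univ *
        ∫⁻ s in Ioi (0 : ℝ), ENNReal.ofReal (s ^ n) * H (t, √(t ^ 2 + s ^ 2)) := by
      rw [lintegral_inner_norm_eq_prod hu hH]
      refine lintegral_congr fun t => ?_
      rw [lintegral_comp_norm_eq_toSphere volume (f := fun s => H (t, √(t ^ 2 + s ^ 2)))
        (by fun_prop), hn', Nat.add_sub_cancel]
    _ = (volume : Measure (ℝ ∙ u)ᗮ).toSphere univ * ∫⁻ r in Ioi (0 : ℝ), ∫⁻ θ in Ioo 0 π,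
        ENNReal.ofReal r * (ENNReal.ofReal ((r * sin θ) ^ n) *
          H (r * cos θ, √((r * cos θ) ^ 2 + (r * sin θ) ^ 2))) := by
      rw [lintegral_const_mul _ hmeas.lintegral_prod_right',
        lintegral_upperHalfPlane_eq_polar hmeas]
    _ = _ := by
      congr 1
      refine setLIntegral_congr_fun measurableSet_Ioi fun r (hr : 0 < r) =>
        setLIntegral_congr_fun measurableSet_Ioo fun θ hθ => ?_
      have hradius : √((r * cos θ) ^ 2 + (r * sin θ) ^ 2) = r := by
        rw [mul_pow, mul_pow, ← mul_add, cos_sq_add_sin_sq, mul_one, sqrt_sq hr.le]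
      have : 0 ≤ sin θ := (sin_pos_of_mem_Ioo hθ).le
      rw [hradius, hn, ← mul_assoc, ← ENNReal.ofReal_mul hr.le,
        ← ENNReal.ofReal_mul (by positivity), Nat.add_sub_cancel, Nat.add_sub_assoc one_le_two]
      congr 2
      ring

lemma exists_measurable_lintegral_pow_mul_eq_one (n : ℕ) :
    ∃ g : ℝ → ℝ≥0∞, Measurable g ∧ ∫⁻ r in Ioi (0 : ℝ), ENNReal.ofReal (r ^ n) * g r = 1 := by
  refine ⟨(Ioo 0 1).indicator fun r => (ENNReal.ofReal (r ^ n))⁻¹,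
    Measurable.indicator (by fun_prop) measurableSet_Ioo, ?_⟩
  have hweight : ∀ r ∈ Ioi (0 : ℝ), ENNReal.ofReal (r ^ n) *
      (Ioo 0 1).indicator (fun r => (ENNReal.ofReal (r ^ n))⁻¹) r = (Ioo 0 1).indicator 1 r := by
    intro r (hr : 0 < r)
    by_cases h1 : r ∈ Ioo (0 : ℝ) 1
    · rw [indicator_of_mem h1, indicator_of_mem h1, Pi.one_apply, ENNReal.mul_inv_cancel
        (ENNReal.ofReal_pos.2 (pow_pos hr n)).ne' ENNReal.ofReal_ne_top]
    · rw [indicator_of_notMem h1, indicator_of_notMem h1, mul_zero]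
  rw [setLIntegral_congr_fun measurableSet_Ioi hweight, setLIntegral_indicator measurableSet_Ioo,
    inter_eq_left.2 Ioo_subset_Ioi_self]
  simp only [Pi.one_apply, lintegral_const, Measure.restrict_apply_univ, volume_Ioo, sub_zero,
    ENNReal.ofReal_one, mul_one]

lemma lintegral_inner_toSphere (hu : ‖u‖ = 1) (hE : 2 ≤ finrank ℝ E)
    {F : ℝ → ℝ≥0∞} (hF : Measurable F) :
    ∫⁻ y : sphere (0 : E) 1, F ⟪u, y⟫_ℝ ∂(volume : Measure E).toSphere =
      (volume : Measure (ℝ ∙ u)ᗮ).toSphere univ *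
        ∫⁻ θ in Ioo 0 π, ENNReal.ofReal (sin θ ^ (finrank ℝ E - 2)) * F (cos θ) := by
  have : Nontrivial E := nontrivial_of_finrank_pos (R := ℝ) (by omega)
  obtain ⟨g, hg, hg1⟩ := exists_measurable_lintegral_pow_mul_eq_one (finrank ℝ E - 1)
  have hsphere : ∫⁻ x : E, F (⟪u, x⟫_ℝ / ‖x‖) * g ‖x‖ =
      ∫⁻ y : sphere (0 : E) 1, F ⟪u, y⟫_ℝ ∂(volume : Measure E).toSphere := by
    rw [lintegral_eq_lintegral_toSphere volume (by fun_prop),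
      ← one_mul (∫⁻ y : sphere (0 : E) 1, F ⟪u, y⟫_ℝ ∂_), ← hg1,
      ← lintegral_mul_const _ (by fun_prop)]
    refine setLIntegral_congr_fun measurableSet_Ioi fun r (hr : 0 < r) => ?_
    simp only [inner_smul_right, norm_smul, norm_eq_of_mem_sphere, norm_of_nonneg hr.le, mul_one,
      mul_div_cancel_left₀ _ hr.ne']
    rw [lintegral_mul_const _ (by fun_prop)]
    ring
  have hpolar : ∫⁻ x : E, F (⟪u, x⟫_ℝ / ‖x‖) * g ‖x‖ =
      (volume : Measure (ℝ ∙ u)ᗮ).toSphere univ *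
        ∫⁻ θ in Ioo 0 π, ENNReal.ofReal (sin θ ^ (finrank ℝ E - 2)) * F (cos θ) := by
    rw [lintegral_inner_norm_eq_polar hu hE (H := fun p => F (p.1 / p.2) * g p.2) (by fun_prop)]
    congr 1
    rw [← one_mul (∫⁻ _ in Ioo 0 π, _), ← hg1, ← lintegral_mul_const _ (by fun_prop)]
    refine setLIntegral_congr_fun measurableSet_Ioi fun r (hr : 0 < r) => ?_
    simp only [mul_div_cancel_left₀ _ hr.ne']
    rw [← lintegral_const_mul _ (by fun_prop)]
    exact lintegral_congr fun θ => by ring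
  rw [← hsphere, hpolar]

end Inner

end SphereMeasure

section LogIntegrals

lemma hasSum_log_one_add_two_mul_cos {r : ℝ} (hr : |r| < 1) (θ : ℝ) :
    HasSum (fun n : ℕ => -2 * (-r) ^ n / n * cos (n * θ)) (log (1 + 2 * r * cos θ + r ^ 2)) := by
  set z : ℂ := r * Complex.exp (θ * Complex.I) with hz
  have hnorm : ‖z‖ < 1 := by
    rwa [norm_mul, Complex.norm_exp_ofReal_mul_I, mul_one, Complex.norm_real, norm_eq_abs]
  have hsum := (Complex.hasSum_re (Complex.hasSum_taylorSeries_log hnorm)).mul_left 2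
  have hterm (n : ℕ) : 2 * ((-1) ^ (n + 1) * z ^ n / n).re = -2 * (-r) ^ n / n * cos (n * θ) := by
    have : (-1) ^ (n + 1) * z ^ n / n =
        ((-(-r) ^ n / n : ℝ) : ℂ) * Complex.exp ((n * θ : ℝ) * Complex.I) := by
      rw [hz, mul_pow, ← Complex.exp_nat_mul, neg_pow r]
      push_cast
      ring_nf
    rw [this, Complex.re_ofReal_mul, Complex.exp_ofReal_mul_I_re]
    ring
  have hnormSq : Complex.normSq (1 + z) = 1 + 2 * r * cos θ + r ^ 2 := by
    rw [Complex.normSq_apply]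
    simp only [hz, Complex.add_re, Complex.add_im, Complex.one_re, Complex.one_im,
      Complex.re_ofReal_mul, Complex.im_ofReal_mul, Complex.exp_ofReal_mul_I_re,
      Complex.exp_ofReal_mul_I_im]
    linear_combination r ^ 2 * sin_sq_add_cos_sq θ
  have hlog : 2 * (Complex.log (1 + z)).re = log (1 + 2 * r * cos θ + r ^ 2) := by
    rw [Complex.log_re, Complex.norm_def, log_sqrt (Complex.normSq_nonneg _), hnormSq]
    ring
  simpa only [hterm, hlog] using hsum

lemma sin_sq_le_one_add_two_mul_cos (r θ : ℝ) : sin θ ^ 2 ≤ 1 + 2 * r * cos θ + r ^ 2 := by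
  nlinarith [sq_nonneg (r + cos θ), sin_sq_add_cos_sq θ]

lemma one_add_two_mul_cos_le (r θ : ℝ) : 1 + 2 * r * cos θ + r ^ 2 ≤ (1 + |r|) ^ 2 := by
  have hcos : r * cos θ ≤ |r| := by
    calc r * cos θ ≤ |r| * |cos θ| := (le_abs_self _).trans (abs_mul r _).le
      _ ≤ |r| := mul_le_of_le_one_right (abs_nonneg r) (abs_cos_le_one θ)
  nlinarith [sq_abs r]

lemma abs_log_one_add_two_mul_cos_le (r : ℝ) {θ : ℝ} (hθ : sin θ ≠ 0) :
    |log (1 + 2 * r * cos θ + r ^ 2)| ≤ 2 * |log (sin θ)| + 2 * log (1 + |r|) := by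
  have hsin : 0 < sin θ ^ 2 := by positivity
  have hle := sin_sq_le_one_add_two_mul_cos r θ
  have hupper := log_le_log (hsin.trans_le hle) (one_add_two_mul_cos_le r θ)
  have hlower := log_le_log hsin hle
  rw [log_pow, Nat.cast_ofNat] at hupper hlower
  have : 0 ≤ log (1 + |r|) := log_nonneg (by linarith [abs_nonneg r])
  rw [abs_le]
  constructor <;> linarith [neg_abs_le (log (sin θ)), abs_nonneg (log (sin θ))]

lemma ae_sin_ne_zero : ∀ᵐ θ : ℝ, sin θ ≠ 0 := by
  have hzeros : sin ⁻¹' {0} = range fun n : ℤ => n * π := by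
    ext θ
    exact sin_eq_zero_iff
  exact (hzeros ▸ countable_range _ : (sin ⁻¹' {0}).Countable).ae_notMem volume

lemma intervalIntegrable_log_one_add_two_mul_cos (r a b : ℝ) :
    IntervalIntegrable (fun θ => log (1 + 2 * r * cos θ + r ^ 2)) volume a b := by
  have hbound : IntervalIntegrable (fun θ => 2 * |log (sin θ)| + 2 * log (1 + |r|)) volume a b :=
    (intervalIntegrable_log_sin.abs.const_mul 2).add intervalIntegrable_const
  refine hbound.mono_fun' (Measurable.aestronglyMeasurable (by fun_prop)) (ae_restrict_of_ae ?_)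
  filter_upwards [ae_sin_ne_zero] with θ hθ
  exact abs_log_one_add_two_mul_cos_le r hθ

lemma continuous_integral_mul_log {w : ℝ → ℝ} (hw : Continuous w) (a b : ℝ) :
    Continuous fun r => ∫ θ in a..b, w θ * log (1 + 2 * r * cos θ + r ^ 2) := by
  refine continuous_iff_continuousAt.2 fun r₀ =>
    intervalIntegral.continuousAt_of_dominated_interval
      (bound := fun θ => |w θ| * (2 * |log (sin θ)| + 2 * log (1 + (|r₀| + 1)))) ?_ ?_ ?_ ?_
  · exact .of_forall fun r => Measurable.aestronglyMeasurable (by fun_prop)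
  · filter_upwards [ball_mem_nhds r₀ one_pos] with r hr
    filter_upwards [ae_sin_ne_zero] with θ hθ _
    have hr' : |r| ≤ |r₀| + 1 := by
      rw [mem_ball, dist_eq] at hr
      linarith [abs_sub_abs_le_abs_sub r r₀]
    rw [norm_mul, norm_eq_abs, norm_eq_abs]
    refine mul_le_mul_of_nonneg_left ((abs_log_one_add_two_mul_cos_le r hθ).trans ?_) (abs_nonneg _)
    gcongr
  · exact ((intervalIntegrable_log_sin.abs.const_mul 2).add
      intervalIntegrable_const).continuousOn_mul hw.abs.continuousOn
  · filter_upwards [ae_sin_ne_zero] with θ hθ _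
    have hpos : 0 < 1 + 2 * r₀ * cos θ + r₀ ^ 2 :=
      (by positivity : 0 < sin θ ^ 2).trans_le (sin_sq_le_one_add_two_mul_cos r₀ θ)
    exact continuousAt_const.mul (ContinuousAt.log (by fun_prop) hpos.ne')

lemma hasSum_integral_mul_log {w : ℝ → ℝ} (hw : Continuous w) {r : ℝ} (hr : |r| < 1)
    (a b : ℝ) :
    HasSum (fun n : ℕ => -2 * (-r) ^ n / n * ∫ θ in a..b, w θ * cos (n * θ))
      (∫ θ in a..b, w θ * log (1 + 2 * r * cos θ + r ^ 2)) := by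
  have hsum := intervalIntegral.hasSum_integral_of_dominated_convergence
    (μ := volume) (a := a) (b := b)
    (F := fun (n : ℕ) θ => -2 * (-r) ^ n / n * (w θ * cos (n * θ)))
    (f := fun θ => w θ * log (1 + 2 * r * cos θ + r ^ 2))
    (fun n θ => |r| ^ n * (2 * |w θ|)) (fun n => by fun_prop) (fun n => ae_of_all _ fun θ _ => ?_)
    (ae_of_all _ fun θ _ => (summable_geometric_of_lt_one (abs_nonneg r) hr).mul_right _) ?_
    (ae_of_all _ fun θ _ => ?_)
  · simpa only [intervalIntegral.integral_const_mul] using hsum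
  · have hcoeff : |r| ^ n / n ≤ |r| ^ n := by
      rcases n.eq_zero_or_pos with rfl | hn
      · simp
      · exact div_le_self (by positivity) (by exact_mod_cast hn)
    calc ‖-2 * (-r) ^ n / n * (w θ * cos (n * θ))‖
        = |r| ^ n / n * (2 * (|w θ| * |cos (n * θ)|)) := by
          simp only [norm_eq_abs, abs_mul, abs_div, abs_pow, abs_neg, Nat.abs_cast, Nat.abs_ofNat]
          ring
      _ ≤ |r| ^ n * (2 * (|w θ| * 1)) := by
          gcongr
          exact abs_cos_le_one _
      _ = |r| ^ n * (2 * |w θ|) := by rw [mul_one]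
  · simp only [tsum_mul_right]
    exact Continuous.intervalIntegrable (by fun_prop) _ _
  · simpa only [mul_left_comm (w θ)] using (hasSum_log_one_add_two_mul_cos hr θ).mul_left (w θ)

lemma integral_cos_int_mul {k : ℤ} (hk : k ≠ 0) : ∫ θ in 0..π, cos (k * θ) = 0 := by
  rw [intervalIntegral.integral_comp_mul_left (fun θ => cos θ) (Int.cast_ne_zero.2 hk),
    integral_cos, mul_zero, sin_zero, sin_int_mul_pi, sub_zero, smul_zero]

lemma integral_cos_nat_mul_mul_cos_nat_mul {m n : ℕ} (hmn : m ≠ n) :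
    ∫ θ in 0..π, cos (m * θ) * cos (n * θ) = 0 := by
  have hprod (θ : ℝ) : cos (m * θ) * cos (n * θ) =
      (cos ((m - n : ℤ) * θ) + cos ((m + n : ℤ) * θ)) / 2 := by
    push_cast
    rw [sub_mul, add_mul, cos_sub, cos_add]
    ring
  simp only [hprod]
  rw [intervalIntegral.integral_div, intervalIntegral.integral_add
      (Continuous.intervalIntegrable (by fun_prop) _ _)
      (Continuous.intervalIntegrable (by fun_prop) _ _),
    integral_cos_int_mul (by omega), integral_cos_int_mul (by omega), add_zero, zero_div]

lemma integral_cos_nat_mul_sq {m : ℕ} (hm : m ≠ 0) :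
    ∫ θ in 0..π, cos (m * θ) * cos (m * θ) = π / 2 := by
  have hsq (θ : ℝ) : cos (m * θ) * cos (m * θ) = (1 + cos ((2 * m : ℤ) * θ)) / 2 := by
    push_cast
    rw [← sq, cos_sq, mul_assoc, add_div]
  simp only [hsq]
  rw [intervalIntegral.integral_div, intervalIntegral.integral_add intervalIntegrable_const
      (Continuous.intervalIntegrable (by fun_prop) _ _), integral_cos_int_mul (by omega),
    intervalIntegral.integral_const, sub_zero, smul_eq_mul, mul_one, add_zero]

-- For `m = 0` both sides vanish, the right one because of the junk value `x / 0 = 0`.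
lemma integral_cos_nat_mul_mul_log (m : ℕ) {r : ℝ} (hr : |r| ≤ 1) :
    ∫ θ in 0..π, cos (m * θ) * log (1 + 2 * r * cos θ + r ^ 2) = -π * (-r) ^ m / m := by
  have hcos : Continuous fun θ : ℝ => cos (m * θ) := by fun_prop
  have hinterior : EqOn
      (fun r => ∫ θ in 0..π, cos (m * θ) * log (1 + 2 * r * cos θ + r ^ 2))
      (fun r => -π * (-r) ^ m / m) (ball 0 1) := fun r hr => by
    rw [mem_ball_zero_iff, norm_eq_abs] at hr
    have hsum := hasSum_integral_mul_log hcos hr 0 π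
    have horth (n : ℕ) (hn : n ≠ m) :
        -2 * (-r) ^ n / n * ∫ θ in 0..π, cos (m * θ) * cos (n * θ) = 0 := by
      rw [integral_cos_nat_mul_mul_cos_nat_mul hn.symm, mul_zero]
    refine (hsum.unique (hasSum_single m horth)).trans ?_
    rcases eq_or_ne m 0 with rfl | hm
    · simp only [CharP.cast_eq_zero, div_zero, zero_mul]
    · rw [integral_cos_nat_mul_sq hm]
      ring
  refine (hinterior.closure (continuous_integral_mul_log hcos 0 π) (by fun_prop)) ?_
  rwa [closure_ball _ one_ne_zero, mem_closedBall_zero_iff]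

lemma integral_sin_sq_mul_log_of_le_one {r : ℝ} (hr : |r| ≤ 1) :
    ∫ θ in 0..π, sin θ ^ 2 * log (1 + 2 * r * cos θ + r ^ 2) = π * r ^ 2 / 4 := by
  have hint (m : ℕ) : IntervalIntegrable
      (fun θ => cos (m * θ) * log (1 + 2 * r * cos θ + r ^ 2)) volume 0 π :=
    (intervalIntegrable_log_one_add_two_mul_cos r 0 π).continuousOn_mul (by fun_prop)
  have hsin (θ : ℝ) : sin θ ^ 2 * log (1 + 2 * r * cos θ + r ^ 2) =
      (cos ((0 : ℕ) * θ) * log (1 + 2 * r * cos θ + r ^ 2) -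
        cos ((2 : ℕ) * θ) * log (1 + 2 * r * cos θ + r ^ 2)) / 2 := by
    rw [sin_sq_eq_half_sub, Nat.cast_zero, zero_mul, cos_zero, Nat.cast_ofNat]
    ring
  simp only [hsin]
  rw [intervalIntegral.integral_div, intervalIntegral.integral_sub (hint 0) (hint 2),
    integral_cos_nat_mul_mul_log 0 hr, integral_cos_nat_mul_mul_log 2 hr, Nat.cast_zero, div_zero]
  push_cast
  ring

lemma integral_sin_sq_mul_log_of_one_le {r : ℝ} (hr : 1 ≤ r) :
    ∫ θ in 0..π, sin θ ^ 2 * log (1 + 2 * r * cos θ + r ^ 2) =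
      π * log r + π / (4 * r ^ 2) := by
  have hr0 : 0 < r := one_pos.trans_le hr
  have hinv : |r⁻¹| ≤ 1 := by
    rw [abs_of_pos (inv_pos.2 hr0)]
    exact inv_le_one_of_one_le₀ hr
  have hreflect : ∀ᵐ θ : ℝ, sin θ ^ 2 * log (1 + 2 * r * cos θ + r ^ 2) =
      sin θ ^ 2 * (2 * log r) + sin θ ^ 2 * log (1 + 2 * r⁻¹ * cos θ + r⁻¹ ^ 2) := by
    filter_upwards [ae_sin_ne_zero] with θ hθ
    have hpos : 0 < 1 + 2 * r⁻¹ * cos θ + r⁻¹ ^ 2 :=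
      (by positivity : 0 < sin θ ^ 2).trans_le (sin_sq_le_one_add_two_mul_cos _ θ)
    have hfactor : 1 + 2 * r * cos θ + r ^ 2 = r ^ 2 * (1 + 2 * r⁻¹ * cos θ + r⁻¹ ^ 2) := by
      field_simp
      ring
    rw [hfactor, log_mul (by positivity) hpos.ne', log_pow, Nat.cast_ofNat, mul_add]
  rw [intervalIntegral.integral_congr_ae (hreflect.mono fun θ h _ => h),
    intervalIntegral.integral_add (Continuous.intervalIntegrable (by fun_prop) _ _)
      ((intervalIntegrable_log_one_add_two_mul_cos _ 0 π).continuousOn_mul (by fun_prop)),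
    integral_sin_sq_mul_log_of_le_one hinv, intervalIntegral.integral_mul_const, integral_sin_sq,
    sin_zero, sin_pi]
  field_simp
  ring

end LogIntegrals

section Clausen

/-- The Clausen function `Cl₂(θ) = ∑_{n ≥ 1} sin (n θ) / n²`, through which integrals of
`log (2 + 2 cos θ)` are evaluated. The sum may include `n = 0`, whose term is `0`. -/
noncomputable def clausen (θ : ℝ) : ℝ := ∑' n : ℕ, sin (n * θ) / (n : ℝ) ^ 2

lemma summable_sin_nat_mul_div_sq (θ : ℝ) : Summable fun n : ℕ => sin (n * θ) / (n : ℝ) ^ 2 := by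
  refine .of_norm_bounded (Real.summable_one_div_nat_pow.2 one_lt_two) fun n => ?_
  rw [norm_div, norm_pow, norm_natCast, norm_eq_abs]
  gcongr
  exact abs_sin_le_one _

lemma sin_nat_mul_supplement (n : ℕ) (θ : ℝ) : sin (n * (π - θ)) = -((-1) ^ n * sin (n * θ)) := by
  rw [mul_sub, Real.sin_nat_mul_pi_sub]

lemma hasSum_integral_log_one_add_two_mul_cos {r : ℝ} (hr : |r| < 1) (a : ℝ) :
    HasSum (fun n : ℕ => -2 * (-r) ^ n * (sin (n * a) / (n : ℝ) ^ 2))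
      (∫ θ in 0..a, log (1 + 2 * r * cos θ + r ^ 2)) := by
  have hsum := hasSum_integral_mul_log continuous_one hr 0 a
  simp only [Pi.one_apply, one_mul] at hsum
  refine hsum.congr_fun fun n => ?_
  rcases eq_or_ne n 0 with rfl | hn
  · simp
  · rw [intervalIntegral.integral_comp_mul_left (fun θ => cos θ) (Nat.cast_ne_zero.2 hn),
      integral_cos, mul_zero, sin_zero, sub_zero, smul_eq_mul]
    field_simp

-- Abel summation: the radius `r` tends to `1`, where the series still converges uniformly.
lemma integral_log_two_add_two_mul_cos (a : ℝ) :
    ∫ θ in 0..a, log (2 + 2 * cos θ) = 2 * clausen (π - a) := by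
  have hseries : ContinuousOn
      (fun r : ℝ => ∑' n : ℕ, -2 * (-r) ^ n * (sin (n * a) / (n : ℝ) ^ 2)) (closedBall 0 1) := by
    refine continuousOn_tsum (u := fun n : ℕ => 2 * |sin (n * a) / (n : ℝ) ^ 2|)
      (fun n => by fun_prop) ((summable_sin_nat_mul_div_sq a).abs.mul_left 2) fun n r hr => ?_
    rw [mem_closedBall_zero_iff] at hr
    rw [norm_mul, norm_mul, norm_pow, norm_neg, norm_neg, norm_eq_abs (sin _ / _), norm_ofNat]
    gcongr
    exact mul_le_of_le_one_right zero_le_two (pow_le_one₀ (norm_nonneg r) hr)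
  have hinterior : EqOn (fun r => ∫ θ in 0..a, log (1 + 2 * r * cos θ + r ^ 2))
      (fun r : ℝ => ∑' n : ℕ, -2 * (-r) ^ n * (sin (n * a) / (n : ℝ) ^ 2)) (ball 0 1) :=
    fun r hr => (hasSum_integral_log_one_add_two_mul_cos (mem_ball_zero_iff.1 hr) a).tsum_eq.symm
  have hlog : Continuous fun r => ∫ θ in 0..a, log (1 + 2 * r * cos θ + r ^ 2) := by
    simpa only [Pi.one_apply, one_mul] using continuous_integral_mul_log continuous_one 0 a
  have hone := hinterior.of_subset_closure hlog.continuousOn hseries ball_subset_closedBall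
    (closure_ball (0 : ℝ) one_ne_zero).ge (show (1 : ℝ) ∈ closedBall 0 1 by simp)
  calc ∫ θ in 0..a, log (2 + 2 * cos θ)
      = ∫ θ in 0..a, log (1 + 2 * 1 * cos θ + 1 ^ 2) := by ring_nf
    _ = ∑' n : ℕ, -2 * (-1) ^ n * (sin (n * a) / (n : ℝ) ^ 2) := hone
    _ = 2 * clausen (π - a) := by
      rw [clausen, ← tsum_mul_left]
      refine tsum_congr fun n => ?_
      rw [sin_nat_mul_supplement]
      ring

lemma clausen_two_pi_sub (θ : ℝ) : clausen (2 * π - θ) = -clausen θ := by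
  rw [clausen, clausen, ← tsum_neg]
  refine tsum_congr fun n => ?_
  rw [mul_sub, sin_nat_mul_two_pi_sub, neg_div]

lemma clausen_two_mul (θ : ℝ) : clausen (2 * θ) = 2 * clausen θ - 2 * clausen (π - θ) := by
  set f : ℕ → ℝ := fun n => sin (n * θ) / (n : ℝ) ^ 2 + -(sin (n * (π - θ)) / (n : ℝ) ^ 2) with hf
  have hsum : Summable f :=
    (summable_sin_nat_mul_div_sq θ).add (summable_sin_nat_mul_div_sq (π - θ)).neg
  have htsum : ∑' n, f n = clausen θ - clausen (π - θ) := by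
    rw [(summable_sin_nat_mul_div_sq θ).tsum_add (summable_sin_nat_mul_div_sq (π - θ)).neg,
      tsum_neg, ← sub_eq_add_neg, clausen, clausen]
  have heven (k : ℕ) : f (2 * k) = 1 / 2 * (sin (k * (2 * θ)) / (k : ℝ) ^ 2) := by
    simp only [hf, sin_nat_mul_supplement, pow_mul, neg_one_sq, one_pow]
    push_cast
    rw [mul_pow, mul_comm 2 (k : ℝ), mul_assoc]
    ring
  have hodd (k : ℕ) : f (2 * k + 1) = 0 := by
    simp only [hf, sin_nat_mul_supplement, pow_succ, pow_mul]
    ring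
  have hsplit := tsum_even_add_odd
    (hsum.comp_injective fun m n (h : 2 * m = 2 * n) => by omega)
    (hsum.comp_injective fun m n (h : 2 * m + 1 = 2 * n + 1) => by omega)
  simp only [heven, hodd, tsum_mul_left, tsum_zero, add_zero, htsum] at hsplit
  rw [← clausen] at hsplit
  linarith

/-- The nontrivial Dirichlet character modulo `3`, as a real-valued function on `ℕ`. -/
noncomputable def chiThree (n : ℕ) : ℝ := if n % 3 = 1 then 1 else if n % 3 = 2 then -1 else 0

lemma cos_two_pi_div_three : cos (2 * π / 3) = -(1 / 2) := by
  rw [show 2 * π / 3 = π - π / 3 by ring, cos_pi_sub, cos_pi_div_three]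

lemma sin_two_pi_div_three : sin (2 * π / 3) = √3 / 2 := by
  rw [show 2 * π / 3 = π - π / 3 by ring, sin_pi_sub, sin_pi_div_three]

lemma sin_two_mul_two_pi_div_three : sin (2 * (2 * π / 3)) = -(√3 / 2) := by
  rw [sin_two_mul, sin_two_pi_div_three, cos_two_pi_div_three]
  ring

lemma sin_nat_mul_two_pi_div_three (n : ℕ) : sin (n * (2 * π / 3)) = √3 / 2 * chiThree n := by
  have hdivmod : (n : ℝ) = (n % 3 : ℕ) + 3 * (n / 3 : ℕ) := by
    exact_mod_cast (Nat.mod_add_div n 3).symm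
  have hangle : n * (2 * π / 3) = (n % 3 : ℕ) * (2 * π / 3) + (n / 3 : ℕ) * (2 * π) := by
    rw [hdivmod]
    ring
  rw [hangle, sin_add_nat_mul_two_pi, chiThree]
  have : n % 3 < 3 := Nat.mod_lt n three_pos
  interval_cases n % 3
  · simp
  · simp [sin_two_pi_div_three]
  · simp [sin_two_mul_two_pi_div_three]

lemma clausen_two_pi_div_three :
    clausen (2 * π / 3) = √3 / 2 * ∑' n : ℕ, chiThree n / (n : ℝ) ^ 2 := by
  rw [clausen, ← tsum_mul_left]
  refine tsum_congr fun n => ?_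
  rw [sin_nat_mul_two_pi_div_three, mul_div_assoc]

lemma clausen_pi_div_three :
    clausen (π / 3) = 3 * √3 / 4 * ∑' n : ℕ, chiThree n / (n : ℝ) ^ 2 := by
  have hdup := clausen_two_mul (2 * π / 3)
  rw [show 2 * (2 * π / 3) = 2 * π - 2 * π / 3 by ring, clausen_two_pi_sub,
    show π - 2 * π / 3 = π / 3 by ring, clausen_two_pi_div_three] at hdup
  linarith

end Clausen

section UnitQuaternions

lemma measurePreserving_toSphere_of_linearIsometryEquiv {E : Type*} [NormedAddCommGroup E]
    [InnerProductSpace ℝ E] [FiniteDimensional ℝ E] [MeasurableSpace E] [BorelSpace E]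
    (f : E ≃ₗᵢ[ℝ] E) {g : sphere (0 : E) 1 → sphere (0 : E) 1} (hg : ∀ x, (g x : E) = f x) :
    MeasurePreserving g (volume : Measure E).toSphere (volume : Measure E).toSphere := by
  have hgm : Measurable g := (continuous_induced_rng.2 <| by
    simpa only [Function.comp_def, hg] using f.continuous.comp continuous_subtype_val).measurable
  refine ⟨hgm, Measure.ext fun s hs => ?_⟩
  have hcone : Ioo (0 : ℝ) 1 • ((↑) '' (g ⁻¹' s) : Set E) = f ⁻¹' (Ioo (0 : ℝ) 1 • ((↑) '' s)) := by
    ext x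
    constructor
    · rintro ⟨r, hr, _, ⟨y, hy, rfl⟩, rfl⟩
      exact ⟨r, hr, _, ⟨g y, hy, rfl⟩, by simp only [hg, map_smul]⟩
    · rintro ⟨r, hr, _, ⟨z, hz, rfl⟩, hx⟩
      let y : sphere (0 : E) 1 := ⟨f.symm z, by simp⟩
      have hy : g y = z := Subtype.ext ((hg y).trans (f.apply_symm_apply _))
      refine ⟨r, hr, _, ⟨y, by rwa [mem_preimage, hy], rfl⟩, f.injective ?_⟩
      simpa only [map_smul, y, f.apply_symm_apply] using hx
  rw [Measure.map_apply hgm hs, Measure.toSphere_apply' _ (hgm hs), Measure.toSphere_apply' _ hs,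
    hcone, f.measurePreserving.measure_preimage_emb f.toMeasurableEquiv.measurableEmbedding]

/-- Left multiplication by a unit quaternion, as a linear isometry of `ℍ`. -/
noncomputable def mulLeftIsometry (g : sphere (0 : ℍ[ℝ]) 1) : ℍ[ℝ] ≃ₗᵢ[ℝ] ℍ[ℝ] :=
  LinearIsometry.toLinearIsometryEquiv
    { toLinearMap := LinearMap.mulLeft ℝ (g : ℍ[ℝ])
      norm_map' := fun q => by simp } rfl

instance : (volume : Measure ℍ[ℝ]).toSphere.IsMulLeftInvariant where
  map_mul_left_eq_self g :=
    (measurePreserving_toSphere_of_linearIsometryEquiv (mulLeftIsometry g) fun _ => rfl).map_eq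

instance : IsProbabilityMeasure muH :=
  ⟨Measure.haarMeasure_self (K₀ := (⊤ : TopologicalSpace.PositiveCompacts _))⟩

lemma lintegral_toSphere_eq_muH (F : sphere (0 : ℍ[ℝ]) 1 → ℝ≥0∞) :
    ∫⁻ y, F y ∂(volume : Measure ℍ[ℝ]).toSphere =
      (volume : Measure ℍ[ℝ]).toSphere univ * ∫⁻ y, F y ∂muH := by
  conv_lhs => rw [Measure.haarMeasure_unique (volume : Measure ℍ[ℝ]).toSphere ⊤]
  exact lintegral_smul_measure _ _

/-- The law of the angle between a random unit quaternion and a fixed one. -/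
noncomputable def angleMeasure : Measure ℝ :=
  (volume.restrict (Ioo 0 π)).withDensity fun θ => ENNReal.ofReal (2 / π * sin θ ^ 2)

lemma lintegral_sin_sq : ∫⁻ θ in Ioo 0 π, ENNReal.ofReal (sin θ ^ 2) = ENNReal.ofReal (π / 2) := by
  rw [← ofReal_integral_eq_lintegral_ofReal, ← integral_Ioc_eq_integral_Ioo,
    ← intervalIntegral.integral_of_le pi_pos.le, integral_sin_sq]
  · simp
  · exact (Continuous.integrableOn_Icc (by fun_prop)).mono_set Ioo_subset_Icc_self
  · exact ae_of_all _ fun θ => sq_nonneg _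

variable {u : ℍ[ℝ]}

lemma lintegral_inner_muH (hu : ‖u‖ = 1) {F : ℝ → ℝ≥0∞} (hF : Measurable F) :
    ∫⁻ y : sphere (0 : ℍ[ℝ]) 1, F ⟪u, y⟫_ℝ ∂muH = ∫⁻ θ, F (cos θ) ∂angleMeasure := by
  have hfin : 2 ≤ finrank ℝ ℍ[ℝ] := by norm_num [Quaternion.finrank_eq_four]
  set σ := (volume : Measure (ℝ ∙ u)ᗮ).toSphere univ
  have hlaw {G : ℝ → ℝ≥0∞} (hG : Measurable G) : (volume : Measure ℍ[ℝ]).toSphere univ *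
      ∫⁻ y : sphere (0 : ℍ[ℝ]) 1, G ⟪u, y⟫_ℝ ∂muH =
        σ * ∫⁻ θ in Ioo 0 π, ENNReal.ofReal (sin θ ^ 2) * G (cos θ) := by
    rw [← lintegral_toSphere_eq_muH, lintegral_inner_toSphere hu hfin hG,
      Quaternion.finrank_eq_four]
  have hmass : (volume : Measure ℍ[ℝ]).toSphere univ = σ * ENNReal.ofReal (π / 2) := by
    simpa only [Pi.one_apply, lintegral_const, measure_univ, mul_one, lintegral_sin_sq]
      using hlaw measurable_one
  have hσ : σ ≠ 0 := left_ne_zero_of_mul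
    (hmass ▸ Measure.measure_univ_ne_zero.2 (Measure.toSphere_ne_zero _))
  have hcancel : ENNReal.ofReal (π / 2) * ∫⁻ y : sphere (0 : ℍ[ℝ]) 1, F ⟪u, y⟫_ℝ ∂muH =
      ∫⁻ θ in Ioo 0 π, ENNReal.ofReal (sin θ ^ 2) * F (cos θ) := by
    rw [← ENNReal.mul_right_inj hσ (measure_ne_top _ _), ← hlaw hF, hmass, mul_assoc]
  have hinv : ENNReal.ofReal (2 / π) * ENNReal.ofReal (π / 2) = 1 := by
    rw [← ENNReal.ofReal_mul (by positivity), div_mul_div_cancel₀ pi_ne_zero, div_self two_ne_zero,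
      ENNReal.ofReal_one]
  rw [← one_mul (∫⁻ _, _ ∂muH), ← hinv, mul_assoc, hcancel, ← lintegral_const_mul _ (by fun_prop),
    angleMeasure, lintegral_withDensity_eq_lintegral_mul _ (by fun_prop) (by fun_prop)]
  refine lintegral_congr fun θ => ?_
  rw [← mul_assoc, ← ENNReal.ofReal_mul (by positivity), Pi.mul_apply]

lemma map_inner_muH (hu : ‖u‖ = 1) :
    muH.map (fun y : sphere (0 : ℍ[ℝ]) 1 => ⟪u, y⟫_ℝ) = angleMeasure.map cos :=
  Measure.ext_of_lintegral _ fun F hF => by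
    rw [lintegral_map hF (by fun_prop), lintegral_map hF measurable_cos, lintegral_inner_muH hu hF]

lemma integral_inner_muH (hu : ‖u‖ = 1) {F : ℝ → ℝ} (hF : Measurable F) :
    ∫ y : sphere (0 : ℍ[ℝ]) 1, F ⟪u, y⟫_ℝ ∂muH = 2 / π * ∫ θ in 0..π, sin θ ^ 2 * F (cos θ) := by
  rw [← integral_map (φ := fun y : sphere (0 : ℍ[ℝ]) 1 => ⟪u, y⟫_ℝ) (by fun_prop)
      hF.aestronglyMeasurable, map_inner_muH hu,
    integral_map measurable_cos.aemeasurable hF.aestronglyMeasurable, angleMeasure,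
    integral_withDensity_eq_integral_toReal_smul (by fun_prop) (by simp),
    intervalIntegral.integral_of_le pi_pos.le, integral_Ioc_eq_integral_Ioo,
    ← integral_const_mul]
  refine integral_congr_ae (ae_of_all _ fun θ => ?_)
  have : 0 ≤ 2 / π * sin θ ^ 2 := by positivity
  simp only [ENNReal.toReal_ofReal this, smul_eq_mul, mul_assoc]

lemma integrable_inner_muH (hu : ‖u‖ = 1) {F : ℝ → ℝ} (hF : Measurable F)
    (hint : IntervalIntegrable (fun θ => sin θ ^ 2 * F (cos θ)) volume 0 π) :
    Integrable (fun y : sphere (0 : ℍ[ℝ]) 1 => F ⟪u, y⟫_ℝ) muH := by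
  have hcos : Integrable (F ∘ cos) angleMeasure := by
    rw [angleMeasure, integrable_withDensity_iff_integrable_smul' (by fun_prop) (by simp)]
    rw [intervalIntegrable_iff_integrableOn_Ioo_of_le pi_pos.le] at hint
    refine (hint.const_mul (2 / π)).congr (ae_of_all _ fun θ => ?_)
    have : 0 ≤ 2 / π * sin θ ^ 2 := by positivity
    simp only [ENNReal.toReal_ofReal this, smul_eq_mul, mul_assoc, Function.comp_apply]
  rw [← integrable_map_measure hF.aestronglyMeasurable measurable_cos.aemeasurable,
    ← map_inner_muH hu, integrable_map_measure hF.aestronglyMeasurable (by fun_prop)] at hcos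
  exact hcos

end UnitQuaternions

section SphereLogMean

/-- The mean of `log ‖a + y‖` over unit quaternions `y`, as a function of `r = ‖a‖ ≥ 0`. -/
noncomputable def sphereLogMean (r : ℝ) : ℝ :=
  if r ≤ 1 then r ^ 2 / 4 else log r + 1 / (4 * r ^ 2)

lemma sphereLogMean_of_le_one {r : ℝ} (hr : r ≤ 1) : sphereLogMean r = r ^ 2 / 4 := if_pos hr

lemma sphereLogMean_of_one_le {r : ℝ} (hr : 1 ≤ r) :
    sphereLogMean r = log r + 1 / (4 * r ^ 2) := by
  rcases hr.eq_or_lt with rfl | hr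
  · norm_num [sphereLogMean]
  · exact if_neg hr.not_ge

lemma sphereLogMean_nonneg (r : ℝ) : 0 ≤ sphereLogMean r := by
  rcases le_total r 1 with hr | hr
  · rw [sphereLogMean_of_le_one hr]
    positivity
  · have := log_nonneg hr
    rw [sphereLogMean_of_one_le hr]
    positivity

lemma continuous_sphereLogMean : Continuous sphereLogMean := by
  have hne {r : ℝ} (hr : r ∈ {r : ℝ | 1 ≤ r}) : r ≠ 0 := (one_pos.trans_le hr).ne'
  refine continuous_if_le continuous_id continuous_const (by fun_prop) ?_ ?_
  · exact (continuousOn_log.mono fun r hr => hne hr).add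
      (continuousOn_const.div (by fun_prop) fun r hr =>
        mul_ne_zero four_ne_zero (pow_ne_zero 2 (hne hr)))
  · rintro r rfl
    norm_num

lemma integral_sin_sq_mul_log {r : ℝ} (hr : 0 ≤ r) :
    ∫ θ in 0..π, sin θ ^ 2 * log (1 + 2 * r * cos θ + r ^ 2) = π * sphereLogMean r := by
  rcases le_total r 1 with h | h
  · rw [integral_sin_sq_mul_log_of_le_one (abs_le.2 ⟨by linarith, h⟩), sphereLogMean_of_le_one h]
    ring
  · rw [integral_sin_sq_mul_log_of_one_le h, sphereLogMean_of_one_le h]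
    ring

lemma exists_norm_eq_one_norm_smul_eq {E : Type*} [NormedAddCommGroup E] [NormedSpace ℝ E]
    [Nontrivial E] (a : E) : ∃ u : E, ‖u‖ = 1 ∧ ‖a‖ • u = a := by
  rcases eq_or_ne a 0 with rfl | ha
  · obtain ⟨u, hu⟩ := exists_norm_eq E zero_le_one
    exact ⟨u, hu, by rw [norm_zero, zero_smul]⟩
  · have ha' : ‖a‖ ≠ 0 := norm_ne_zero_iff.2 ha
    exact ⟨‖a‖⁻¹ • a, by rw [norm_smul, norm_inv, norm_norm, inv_mul_cancel₀ ha'],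
      smul_inv_smul₀ ha' a⟩

lemma log_norm_smul_add {E : Type*} [NormedAddCommGroup E] [InnerProductSpace ℝ E] (r : ℝ) {u : E}
    (hu : ‖u‖ = 1) (y : sphere (0 : E) 1) :
    log ‖r • u + y‖ = log (1 + 2 * r * ⟪u, y⟫_ℝ + r ^ 2) / 2 := by
  have hsq : ‖r • u + y‖ ^ 2 = 1 + 2 * r * ⟪u, y⟫_ℝ + r ^ 2 := by
    rw [norm_add_sq_real, norm_smul, hu, norm_eq_of_mem_sphere, real_inner_smul_left, mul_one,
      norm_eq_abs, sq_abs]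
    ring
  rw [← hsq, log_pow, Nat.cast_ofNat, mul_div_cancel_left₀ _ two_ne_zero]

lemma integrable_log_norm_add (a : ℍ[ℝ]) :
    Integrable (fun y : sphere (0 : ℍ[ℝ]) 1 => log ‖a + y‖) muH := by
  obtain ⟨u, hu, hau⟩ := exists_norm_eq_one_norm_smul_eq a
  rw [← hau]
  simp only [log_norm_smul_add _ hu]
  refine integrable_inner_muH hu (F := fun t => log (1 + 2 * ‖a‖ * t + ‖a‖ ^ 2) / 2)
    (by fun_prop) ?_
  exact ((intervalIntegrable_log_one_add_two_mul_cos ‖a‖ 0 π).div_const 2).continuousOn_mul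
    (by fun_prop)

lemma integral_log_norm_add (a : ℍ[ℝ]) :
    ∫ y : sphere (0 : ℍ[ℝ]) 1, log ‖a + y‖ ∂muH = sphereLogMean ‖a‖ := by
  obtain ⟨u, hu, hau⟩ := exists_norm_eq_one_norm_smul_eq a
  calc ∫ y : sphere (0 : ℍ[ℝ]) 1, log ‖a + y‖ ∂muH
      = ∫ y : sphere (0 : ℍ[ℝ]) 1, log (1 + 2 * ‖a‖ * ⟪u, y⟫_ℝ + ‖a‖ ^ 2) / 2 ∂muH := by
        simp only [← log_norm_smul_add _ hu, hau]
    _ = 2 / π * ∫ θ in 0..π, sin θ ^ 2 * (log (1 + 2 * ‖a‖ * cos θ + ‖a‖ ^ 2) / 2) :=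
        integral_inner_muH hu (F := fun t => log (1 + 2 * ‖a‖ * t + ‖a‖ ^ 2) / 2) (by fun_prop)
    _ = sphereLogMean ‖a‖ := by
        simp only [← mul_div_assoc]
        rw [intervalIntegral.integral_div, integral_sin_sq_mul_log (norm_nonneg a)]
        field_simp

end SphereLogMean

section MahlerMeasure

lemma two_add_two_mul_cos_pos {θ : ℝ} (hθ : θ ∈ Ioo (-π) π) : 0 < 2 + 2 * cos θ := by
  have hhalf : 0 < cos (θ / 2) := cos_pos_of_mem_Ioo ⟨by linarith [hθ.1], by linarith [hθ.2]⟩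
  have hdouble : 2 + 2 * cos θ = 4 * cos (θ / 2) ^ 2 := by
    rw [cos_sq, mul_div_cancel₀ θ two_ne_zero]
    ring
  rw [hdouble]
  positivity

lemma uIcc_zero_subset_Ioo_pi {a : ℝ} (ha : a ∈ Ioo (-π) π) : uIcc 0 a ⊆ Ioo (-π) π :=
  ordConnected_Ioo.uIcc_subset ⟨neg_lt_zero.2 pi_pos, pi_pos⟩ ha

lemma continuousOn_log_two_add_two_mul_cos :
    ContinuousOn (fun θ => log (2 + 2 * cos θ)) (Ioo (-π) π) :=
  ContinuousOn.log (by fun_prop) fun _ hθ => (two_add_two_mul_cos_pos hθ).ne'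

lemma integral_cos_two_mul_mul_log {a : ℝ} (ha : a ∈ Ioo (-π) π) :
    ∫ θ in 0..a, cos (2 * θ) * log (2 + 2 * cos θ) =
      sin (2 * a) / 2 * log (2 + 2 * cos a) + sin a - a / 2 - sin (2 * a) / 4 := by
  have hsub := uIcc_zero_subset_Ioo_pi ha
  rw [intervalIntegral.integral_eq_sub_of_hasDerivAt (f := fun θ =>
    sin (2 * θ) / 2 * log (2 + 2 * cos θ) + sin θ - θ / 2 - sin (2 * θ) / 4)]
  · simp
  · intro θ hθ
    have hpos := two_add_two_mul_cos_pos (hsub hθ)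
    have hlog : HasDerivAt (fun θ => log (2 + 2 * cos θ)) (2 * -sin θ / (2 + 2 * cos θ)) θ :=
      (((hasDerivAt_cos θ).const_mul 2).const_add 2).log hpos.ne'
    have hsin : HasDerivAt (fun θ => sin (2 * θ)) (cos (2 * θ) * (2 * 1)) θ :=
      ((hasDerivAt_id θ).const_mul 2).sin
    refine (((((hsin.div_const 2).mul hlog).add (hasDerivAt_sin θ)).sub
      ((hasDerivAt_id θ).div_const 2)).sub (hsin.div_const 4)).congr_deriv ?_
    have hne : 1 + cos θ ≠ 0 := by linarith
    rw [cos_two_mul, sin_two_mul, show 2 + 2 * cos θ = 2 * (1 + cos θ) by ring]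
    field_simp
    linear_combination (-8 * cos θ) * sin_sq_add_cos_sq θ
  · exact ((by fun_prop : ContinuousOn (fun θ => cos (2 * θ)) _).mul
      (continuousOn_log_two_add_two_mul_cos.mono hsub)).intervalIntegrable

lemma integral_sin_sq_mul_log_two_add_two_mul_cos {a : ℝ} (ha : a ∈ Ioo (-π) π) :
    ∫ θ in 0..a, sin θ ^ 2 * log (2 + 2 * cos θ) = clausen (π - a) -
      (sin (2 * a) / 2 * log (2 + 2 * cos a) + sin a - a / 2 - sin (2 * a) / 4) / 2 := by
  have hlog : IntervalIntegrable (fun θ => log (2 + 2 * cos θ)) volume 0 a :=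
    (continuousOn_log_two_add_two_mul_cos.mono (uIcc_zero_subset_Ioo_pi ha)).intervalIntegrable
  have hsin (θ : ℝ) : sin θ ^ 2 * log (2 + 2 * cos θ) =
      (log (2 + 2 * cos θ) - cos (2 * θ) * log (2 + 2 * cos θ)) / 2 := by
    rw [sin_sq_eq_half_sub]
    ring
  simp only [hsin]
  rw [intervalIntegral.integral_div,
    intervalIntegral.integral_sub hlog (hlog.continuousOn_mul (by fun_prop)),
    integral_log_two_add_two_mul_cos, integral_cos_two_mul_mul_log ha]
  ring

lemma sin_sq_mul_sphereLogMean_of_le {θ : ℝ} (hθ : θ ∈ Icc 0 (2 * π / 3)) :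
    sin θ ^ 2 * sphereLogMean √(2 + 2 * cos θ) =
      sin θ ^ 2 * log (2 + 2 * cos θ) / 2 + (1 - cos θ) / 8 := by
  have hcos := cos_le_cos_of_nonneg_of_le_pi hθ.1 (by linarith [pi_pos]) hθ.2
  rw [cos_two_pi_div_three] at hcos
  rw [sphereLogMean_of_one_le (one_le_sqrt.2 (by linarith)), log_sqrt (by linarith),
    sq_sqrt (by linarith), sin_sq]
  have : 1 + cos θ ≠ 0 := by linarith
  have : 2 + 2 * cos θ ≠ 0 := by linarith
  field_simp
  ring

lemma sin_sq_mul_sphereLogMean_of_ge {θ : ℝ} (hθ : θ ∈ Icc (2 * π / 3) π) :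
    sin θ ^ 2 * sphereLogMean √(2 + 2 * cos θ) = sin θ ^ 2 * (1 + cos θ) / 2 := by
  have hcos := cos_le_cos_of_nonneg_of_le_pi (by positivity) hθ.2 hθ.1
  rw [cos_two_pi_div_three] at hcos
  rw [sphereLogMean_of_le_one (sqrt_le_one.2 (by linarith)),
    sq_sqrt (by linarith [neg_one_le_cos θ])]
  ring

lemma integral_sin_sq_mul_one_add_cos (a b : ℝ) :
    ∫ θ in a..b, sin θ ^ 2 * (1 + cos θ) =
      (b - sin b * cos b) / 2 + sin b ^ 3 / 3 - ((a - sin a * cos a) / 2 + sin a ^ 3 / 3) := by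
  simp only [mul_add, mul_one]
  rw [intervalIntegral.integral_add (Continuous.intervalIntegrable (by fun_prop) _ _)
    (Continuous.intervalIntegrable (by fun_prop) _ _), integral_sin_sq, integral_sin_sq_mul_cos]
  ring

lemma integral_sin_sq_mul_sphereLogMean_le_two_pi_div_three :
    ∫ θ in 0..(2 * π / 3), sin θ ^ 2 * sphereLogMean √(2 + 2 * cos θ) =
      clausen (π / 3) / 2 + π / 6 - 7 * √3 / 32 := by
  have hmem : 2 * π / 3 ∈ Ioo (-π) π := ⟨by linarith [pi_pos], by linarith [pi_pos]⟩
  have hnonneg : 0 ≤ 2 * π / 3 := by positivity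
  have hlog : IntervalIntegrable (fun θ => sin θ ^ 2 * log (2 + 2 * cos θ)) volume 0 (2 * π / 3) :=
    ((continuousOn_log_two_add_two_mul_cos.mono
      (uIcc_zero_subset_Ioo_pi hmem)).intervalIntegrable).continuousOn_mul (by fun_prop)
  rw [intervalIntegral.integral_congr fun θ hθ =>
      sin_sq_mul_sphereLogMean_of_le (uIcc_of_le hnonneg ▸ hθ),
    intervalIntegral.integral_add (hlog.div_const 2)
      (Continuous.intervalIntegrable (by fun_prop) _ _),
    intervalIntegral.integral_div, intervalIntegral.integral_div,
    integral_sin_sq_mul_log_two_add_two_mul_cos hmem, intervalIntegral.integral_sub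
      intervalIntegrable_const (Continuous.intervalIntegrable (by fun_prop) _ _),
    integral_cos, intervalIntegral.integral_const, show π - 2 * π / 3 = π / 3 by ring,
    sin_two_mul_two_pi_div_three, sin_two_pi_div_three, cos_two_pi_div_three]
  norm_num
  ring

lemma integral_sin_sq_mul_sphereLogMean_two_pi_div_three_le :
    ∫ θ in (2 * π / 3)..π, sin θ ^ 2 * sphereLogMean √(2 + 2 * cos θ) = π / 12 - √3 / 8 := by
  have hle : 2 * π / 3 ≤ π := by linarith [pi_pos]
  have hcube : √3 ^ 3 = 3 * √3 := by rw [pow_succ, sq_sqrt zero_le_three]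
  rw [intervalIntegral.integral_congr fun θ hθ =>
      sin_sq_mul_sphereLogMean_of_ge (uIcc_of_le hle ▸ hθ),
    intervalIntegral.integral_div, integral_sin_sq_mul_one_add_cos, sin_pi,
    sin_two_pi_div_three, cos_two_pi_div_three, div_pow, hcube]
  ring

lemma integral_sin_sq_mul_sphereLogMean :
    ∫ θ in 0..π, sin θ ^ 2 * sphereLogMean √(2 + 2 * cos θ) =
      clausen (π / 3) / 2 + π / 4 - 11 * √3 / 32 := by
  have hint (a b : ℝ) : IntervalIntegrable
      (fun θ => sin θ ^ 2 * sphereLogMean √(2 + 2 * cos θ)) volume a b :=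
    Continuous.intervalIntegrable
      (Continuous.mul (by fun_prop) (continuous_sphereLogMean.comp (by fun_prop))) a b
  rw [← intervalIntegral.integral_add_adjacent_intervals (hint 0 (2 * π / 3)) (hint _ π),
    integral_sin_sq_mul_sphereLogMean_le_two_pi_div_three,
    integral_sin_sq_mul_sphereLogMean_two_pi_div_three_le]
  ring

lemma integral_sphereLogMean_norm_one_add :
    ∫ x : sphere (0 : ℍ[ℝ]) 1, sphereLogMean ‖1 + (x : ℍ[ℝ])‖ ∂muH =
      2 / π * (clausen (π / 3) / 2 + π / 4 - 11 * √3 / 32) := by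
  have hnorm (x : sphere (0 : ℍ[ℝ]) 1) : ‖1 + (x : ℍ[ℝ])‖ = √(2 + 2 * ⟪(1 : ℍ[ℝ]), x⟫_ℝ) := by
    rw [← sqrt_sq (norm_nonneg _), norm_add_sq_real, norm_one, norm_eq_of_mem_sphere]
    ring_nf
  simp only [hnorm]
  rw [integral_inner_muH norm_one (F := fun t => sphereLogMean √(2 + 2 * t))
      (continuous_sphereLogMean.comp (by fun_prop)).measurable,
    integral_sin_sq_mul_sphereLogMean]

lemma integrable_log_norm_one_add_add :
    Integrable (fun p : sphere (0 : ℍ[ℝ]) 1 × sphere (0 : ℍ[ℝ]) 1 =>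
      log ‖1 + (p.1 : ℍ[ℝ]) + p.2‖) (muH.prod muH) := by
  have hcont : Continuous fun p : sphere (0 : ℍ[ℝ]) 1 × sphere (0 : ℍ[ℝ]) 1 =>
      ‖1 + (p.1 : ℍ[ℝ]) + p.2‖ := by fun_prop
  refine integrable_prod_of_le_of_le_integral (m := 0) (M := 3)
    (measurable_log.comp hcont.measurable).aestronglyMeasurable
    (.of_forall fun x => integrable_log_norm_add (1 + x)) (.of_forall fun p => ?_)
    (.of_forall fun x => ?_)
  · calc log ‖1 + (p.1 : ℍ[ℝ]) + p.2‖ ≤ ‖1 + (p.1 : ℍ[ℝ]) + p.2‖ := log_le_self (norm_nonneg _)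
      _ ≤ ‖(1 : ℍ[ℝ])‖ + ‖(p.1 : ℍ[ℝ])‖ + ‖(p.2 : ℍ[ℝ])‖ := norm_add₃_le
      _ = 3 := by
        rw [norm_one, norm_eq_of_mem_sphere, norm_eq_of_mem_sphere]
        norm_num
  · exact (sphereLogMean_nonneg _).trans_eq (integral_log_norm_add (1 + x)).symm

end MahlerMeasure

/-- Smyth-type formula `m_ℍ(1 + x + y)`. -/
theorem mahlerH2_one_add_x_add_y :
    mahlerH2 (fun x y => 1 + x + y) =
      1 / 2 - 11 * Real.sqrt 3 / (16 * Real.pi)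
        + (3 * Real.sqrt 3 / (4 * Real.pi)) *
          ∑' n : ℕ, (if n % 3 = 1 then (1 : ℝ) else if n % 3 = 2 then -1 else 0) / (n : ℝ) ^ 2 := by
  change _ = _ + _ * ∑' n : ℕ, chiThree n / (n : ℝ) ^ 2
  calc mahlerH2 (fun x y => 1 + x + y)
      = ∫ x : sphere (0 : ℍ[ℝ]) 1, ∫ y : sphere (0 : ℍ[ℝ]) 1, log ‖1 + (x : ℍ[ℝ]) + y‖ ∂muH ∂muH :=
        integral_prod _ integrable_log_norm_one_add_add
    _ = ∫ x : sphere (0 : ℍ[ℝ]) 1, sphereLogMean ‖1 + (x : ℍ[ℝ])‖ ∂muH := by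
        simp only [integral_log_norm_add]
    _ = 2 / π * (clausen (π / 3) / 2 + π / 4 - 11 * √3 / 32) := integral_sphereLogMean_norm_one_add
    _ = _ := by
        rw [clausen_pi_div_three]
        field_simp
        ring
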